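/- arXiv:1303.3385 — 2 statements merged into one kernel-verified Lean document; each statement's English description precedes it below -/
import Mathlib

section
/- Let q be an odd prime power. With A_11 as the anisotropic-point versus anisotropic-polar-line incidence matrix of PG(2,q) over F_2, one has A_11^5 = A_11. -/
/-- The quadratic form `Q(x₀,x₁,x₂) = x₁² - x₀x₂` on `F³`. -/
def Qc (F : Type) [Field F] (v : Fin 3 → F) : F := v 1 ^ 2 - v 0 * v 2

/-- The bilinear form associated to `Qc`. -/
def Bc (F : Type) [Field F] (x y : Fin 3 → F) : F :=
  (2 : F)⁻¹ * (Qc F (x + y) - Qc F x - Qc F y)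

/-- A point of `PG(2,q)` is absolute if `Q` vanishes on it. -/
def Absolute (F : Type) [Field F] (P : Projectivization F (Fin 3 → F)) : Prop :=
  Qc F P.rep = 0

/-- A point of `PG(2,q)` is external if `Q` takes a nonzero square value on it. -/
def External (F : Type) [Field F] (P : Projectivization F (Fin 3 → F)) : Prop :=
  IsSquare (Qc F P.rep) ∧ Qc F P.rep ≠ 0

/-- A point of `PG(2,q)` is internal if `Q` takes a non-square value on it. -/
def Internal (F : Type) [Field F] (P : Projectivization F (Fin 3 → F)) : Prop :=
  ¬ IsSquare (Qc F P.rep)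

/-- Lines of `PG(2,q)` are the 2-dimensional subspaces of `F³`. -/
def IsLine (F : Type) [Field F] (L : Submodule F (Fin 3 → F)) : Prop :=
  Module.finrank F ↥L = 2

/-- The number of absolute points on a line. -/
noncomputable def nAbs (F : Type) [Field F] (L : Submodule F (Fin 3 → F)) : ℕ :=
  Nat.card {P : Projectivization F (Fin 3 → F) // Absolute F P ∧ P.submodule ≤ L}

open Classical in
/-- Indicator of a proposition in `F₂`. -/
noncomputable def ind (p : Prop) : ZMod 2 := if p then 1 else 0

/-- The incidence matrix between anisotropic points and the polar lines of
anisotropic points: the `(P,R)` entry is `1` iff `⟨P,R⟩ = 0`. -/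
noncomputable def A11 (F : Type) [Field F] :
    Matrix {P : Projectivization F (Fin 3 → F) // Qc F P.rep ≠ 0}
      {P : Projectivization F (Fin 3 → F) // Qc F P.rep ≠ 0} (ZMod 2) :=
  Matrix.of fun P R => ind (Bc F P.1.rep R.1.rep = 0)

/-!
The proof works for every polarity `p ↦ p^⊥` of a projective plane of odd order. Split the points
into absolute ones (`p ∈ p^⊥`) and nonabsolute ones, and the polar matrix `N` over a ring of
characteristic two accordingly, with nonabsolute block `A` and mixed blocks `C` and `D`.

On the polar line of a nonabsolute point, sending `x` to the intersection of `x^⊥` with that line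
matches the nonabsolute points in pairs. A line has an even number of points, so that line has an
even number of absolute points as well. Hence `C J = 0` and `J A = 0`, where `J` stands for
all-ones matrices. Distinct polar lines meet exactly once, so `N ^ 2 = 1 + J`. Distinct absolute
points are never conjugate, so the absolute block of `N` is `1`. The blocks of `N ^ 2 = 1 + J` give
`A ^ 2 + C D = 1 + J` and `D + D A = J`. Therefore `C D A = C D` and `A ^ 3 = A + C D`, and finally
`A ^ 5 = A + 2 C D = A`.
-/

open Configuration Matrix
open scoped LinearAlgebra.Projectivization

theorem pow_five_eq_self_of_mul_self_add {R : Type*} [Ring R] {a b j : R}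
    (haa : a * a + b = 1 + j) (hja : j * a = 0) (hba : b + b * a = 0) (hbb : b + b = 0) :
    a ^ 5 = a := by
  have hba' : b * a = b := by rw [eq_neg_of_add_eq_zero_right hba, neg_eq_of_add_eq_zero_left hbb]
  have haaa : a * a * a = a + b := by
    calc a * a * a = (a * a + b) * a + b - (b * a + b) := by noncomm_ring
      _ = a + b := by rw [haa, add_mul, one_mul, hja, hba', hbb, add_zero, sub_zero]
  calc a ^ 5 = a * a * a * a * a := by noncomm_ring
    _ = a * a * a + b := by rw [haaa, add_mul, hba', add_mul, hba', haaa]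
    _ = a := by rw [haaa, add_assoc, hbb, add_zero]

theorem sum_subtype_ite_eq_natCard {α R : Type*} [NonAssocSemiring R] (s t : α → Prop)
    [Fintype {x // s x}] [DecidablePred t] :
    ∑ x : {x // s x}, (if t x then 1 else 0 : R) = Nat.card {x // t x ∧ s x} := by
  rw [Finset.sum_boole, ← Fintype.card_subtype, ← Nat.card_eq_fintype_card,
    Nat.card_congr (Equiv.subtypeSubtypeEquivSubtypeInter s t)]
  simp only [and_comm]

theorem even_natCard_mem {P L : Type*} [Membership P L] [Finite P] [Finite L] [ProjectivePlane P L]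
    (hodd : Odd (ProjectivePlane.order P L)) (l : L) : Even (Nat.card {x : P // x ∈ l}) := by
  rw [show Nat.card {x : P // x ∈ l} = _ from ProjectivePlane.pointCount_eq P l]
  exact hodd.add_one

/-- A polarity of a point-line geometry: a bijection `p ↦ π p` from points to lines such that
`p` lies on the polar line of `q` whenever `q` lies on that of `p`. The absolute points of `π` are
those with `p ∈ π p`. -/
structure IsPolarity {P L : Type*} [Membership P L] (π : P → L) : Prop where
  bijective : Function.Bijective π
  mem_symm : ∀ {p q : P}, p ∈ π q → q ∈ π p

open scoped Classical in
/-- The incidence matrix of the points of a geometry with their images under `π`; it is meant for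
polarities `π`, whose points index both the rows and (through their polar lines) the columns. -/
noncomputable def polarMatrix (R : Type*) [Zero R] [One R] {P L : Type*} [Membership P L]
    (π : P → L) : Matrix P P R :=
  of fun p q => if p ∈ π q then 1 else 0

namespace IsPolarity

variable {P L : Type*} [Membership P L] {π : P → L} {p q : P}

theorem mem_comm (hπ : IsPolarity π) : p ∈ π q ↔ q ∈ π p :=
  ⟨hπ.mem_symm, hπ.mem_symm⟩

theorem existsUnique_mem_mem [HasPoints P L] (hπ : IsPolarity π) (hpq : p ≠ q) :
    ∃! x, x ∈ π p ∧ x ∈ π q :=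
  HasPoints.existsUnique_point P L _ _ (hπ.bijective.injective.ne hpq)

theorem natCard_mem_mem_eq_one [HasPoints P L] (hπ : IsPolarity π) (hpq : p ≠ q) :
    Nat.card {x // x ∈ π p ∧ x ∈ π q} = 1 := by
  obtain ⟨x, hx, hunique⟩ := hπ.existsUnique_mem_mem hpq
  exact Nat.card_eq_one_iff_exists.2 ⟨⟨x, hx⟩, fun y => Subtype.ext (hunique y y.2)⟩

theorem eq_of_mem_of_mem [Nondegenerate P L] (hπ : IsPolarity π) {x y : P} (hpq : p ≠ q)
    (hxp : x ∈ π p) (hyp : y ∈ π p) (hxq : x ∈ π q) (hyq : y ∈ π q) : x = y :=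
  (Nondegenerate.eq_or_eq hxp hyp hxq hyq).resolve_right (hπ.bijective.injective.ne hpq)

theorem mem_iff_eq_of_absolute [Nondegenerate P L] (hπ : IsPolarity π) (hp : p ∈ π p)
    (hq : q ∈ π q) : p ∈ π q ↔ p = q := by
  refine ⟨fun hpq => ?_, fun hpq => hpq ▸ hp⟩
  by_contra hne
  exact hne (hπ.eq_of_mem_of_mem hne hp (hπ.mem_symm hpq) hpq hq)

theorem existsUnique_nonabsolute_mem_mem [HasPoints P L] (hπ : IsPolarity π) (hp : p ∉ π p)
    {x : P} (hxp : x ∈ π p) (hx : x ∉ π x) : ∃! y, (y ∈ π p ∧ y ∉ π y) ∧ y ∈ π x := by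
  obtain ⟨y, ⟨hyp, hyx⟩, hunique⟩ :=
    hπ.existsUnique_mem_mem (p := p) (q := x) fun hpx => hx (hpx ▸ hxp)
  have hy : y ∉ π y := fun hy =>
    have hpy : p ≠ y := fun h => hp (h ▸ hy)
    have hxy : x = y := hπ.eq_of_mem_of_mem hpy hxp hyp (hπ.mem_symm hyx) hy
    hx (hxy ▸ hy)
  exact ⟨y, ⟨⟨hyp, hy⟩, hyx⟩, fun z hz => hunique z ⟨hz.1.1, hz.2⟩⟩

theorem even_natCard_nonabsolute_mem [Finite P] [HasPoints P L] (hπ : IsPolarity π) (hp : p ∉ π p) :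
    Even (Nat.card {x // x ∈ π p ∧ x ∉ π x}) := by
  let conjugacy : SimpleGraph {x // x ∈ π p ∧ x ∉ π x} :=
    { Adj := fun x y => y.1 ∈ π x.1
      symm := ⟨fun _ _ h => hπ.mem_symm h⟩
      loopless := ⟨fun x => x.2.2⟩ }
  have hmatching : (⊤ : conjugacy.Subgraph).IsPerfectMatching := by
    refine SimpleGraph.Subgraph.isPerfectMatching_iff.2 fun ⟨x, hxp, hx⟩ => ?_
    obtain ⟨y, ⟨hy, hyx⟩, hunique⟩ := hπ.existsUnique_nonabsolute_mem_mem hp hxp hx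
    exact ⟨⟨y, hy⟩, hyx, fun z hzx => Subtype.ext (hunique z ⟨z.2, hzx⟩)⟩
  have := Fintype.ofFinite {x // x ∈ π p ∧ x ∉ π x}
  rw [Nat.card_eq_fintype_card]
  exact hmatching.even_card

theorem even_natCard_absolute_mem [Finite P] [Finite L] [ProjectivePlane P L] (hπ : IsPolarity π)
    (hodd : Odd (ProjectivePlane.order P L)) (hp : p ∉ π p) :
    Even (Nat.card {x // x ∈ π p ∧ x ∈ π x}) := by
  classical
  have := Fintype.ofFinite P
  have hsplit : Nat.card {x // x ∈ π p ∧ x ∈ π x} + Nat.card {x // x ∈ π p ∧ x ∉ π x}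
      = Nat.card {x // x ∈ π p} := by
    simp only [Nat.card_eq_fintype_card, Fintype.card_subtype, ← Finset.filter_filter,
      Finset.card_filter_add_card_filter_not]
  have heven := hsplit ▸ even_natCard_mem hodd (π p)
  exact (Nat.even_add.1 heven).2 (hπ.even_natCard_nonabsolute_mem hp)

section PolarMatrix

variable {R : Type*}

theorem toBlock_polarMatrix_absolute [Zero R] [One R] [DecidableEq P] [Nondegenerate P L]
    (hπ : IsPolarity π) :
    (polarMatrix R π).toBlock (fun p => p ∈ π p) (fun p => p ∈ π p) = 1 := by
  ext p q
  simp only [toBlock_apply, polarMatrix, of_apply, one_apply,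
    hπ.mem_iff_eq_of_absolute p.2 q.2, Subtype.ext_iff]

theorem polarMatrix_mul_self_apply [NonAssocSemiring R] [Fintype P] (hπ : IsPolarity π)
    (p q : P) :
    (polarMatrix R π * polarMatrix R π) p q = Nat.card {x // x ∈ π p ∧ x ∈ π q} := by
  classical
  simp only [mul_apply, polarMatrix, of_apply, hπ.mem_comm (p := p), mul_ite, mul_one, mul_zero,
    ← ite_and, Finset.sum_boole, Nat.card_eq_fintype_card, Fintype.card_subtype, and_comm]

variable [Fintype P] [CommRing R] [CharP R 2]

theorem one_vecMul_toBlock_polarMatrix_nonabsolute [DecidablePred fun p => p ∈ π p] [HasPoints P L]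
    (hπ : IsPolarity π) :
    1 ᵥ* (polarMatrix R π).toBlock (fun p => p ∉ π p) (fun p => p ∉ π p) = 0 := by
  classical
  ext p
  simp only [vecMul, dotProduct, Pi.one_apply, one_mul, toBlock_apply, polarMatrix, of_apply,
    sum_subtype_ite_eq_natCard (fun x => x ∉ π x) (fun x => x ∈ π p.1)]
  exact (CharP.cast_eq_zero_iff R 2 _).2 (hπ.even_natCard_nonabsolute_mem p.2).two_dvd

variable [Finite L] [ProjectivePlane P L]

theorem polarMatrix_mul_self [DecidableEq P] (hπ : IsPolarity π)
    (hodd : Odd (ProjectivePlane.order P L)) :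
    polarMatrix R π * polarMatrix R π = 1 + vecMulVec 1 1 := by
  ext p q
  have hrhs : (1 + vecMulVec 1 1 : Matrix P P R) p q = (1 : Matrix P P R) p q + 1 := by
    rw [Matrix.add_apply, vecMulVec_apply, Pi.one_apply, Pi.one_apply, mul_one]
  rw [hπ.polarMatrix_mul_self_apply, hrhs]
  obtain rfl | hpq := eq_or_ne p q
  · simp only [and_self, one_apply_eq, CharTwo.add_self_eq_zero]
    exact (CharP.cast_eq_zero_iff R 2 _).2 (even_natCard_mem hodd (π p)).two_dvd
  · rw [hπ.natCard_mem_mem_eq_one hpq, one_apply_ne hpq, zero_add, Nat.cast_one]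

theorem toBlock_polarMatrix_nonabsolute_absolute_mulVec_one
    [DecidablePred fun p => p ∈ π p] (hπ : IsPolarity π)
    (hodd : Odd (ProjectivePlane.order P L)) :
    (polarMatrix R π).toBlock (fun p => p ∉ π p) (fun p => p ∈ π p) *ᵥ 1 = 0 := by
  classical
  ext p
  simp only [mulVec, dotProduct, Pi.one_apply, mul_one, toBlock_apply, polarMatrix, of_apply,
    hπ.mem_comm (p := p.1), sum_subtype_ite_eq_natCard (fun x => x ∈ π x) (fun x => x ∈ π p.1)]
  exact (CharP.cast_eq_zero_iff R 2 _).2 (hπ.even_natCard_absolute_mem hodd p.2).two_dvd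

end PolarMatrix

end IsPolarity

theorem stmt10_general {P L R : Type*} [Membership P L] [Fintype P] [DecidableEq P] [Finite L]
    [ProjectivePlane P L] (hodd : Odd (ProjectivePlane.order P L)) [CommRing R] [CharP R 2]
    {π : P → L} [DecidablePred fun p => p ∈ π p] (hπ : IsPolarity π) :
    (polarMatrix R π).toBlock (fun p => p ∉ π p) (fun p => p ∉ π p) ^ 5
      = (polarMatrix R π).toBlock (fun p => p ∉ π p) (fun p => p ∉ π p) := by
  let N := polarMatrix R π
  let A := N.toBlock (fun p => p ∉ π p) (fun p => p ∉ π p)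
  let C := N.toBlock (fun p => p ∉ π p) (fun p => p ∈ π p)
  let D := N.toBlock (fun p => p ∈ π p) (fun p => p ∉ π p)
  have hNN : N * N = 1 + vecMulVec 1 1 := hπ.polarMatrix_mul_self hodd
  have hAA : A * A + C * D = 1 + vecMulVec 1 1 := by
    rw [add_comm, ← toBlock_mul_eq_add, hNN, ← toBlock_one_self]
    rfl
  have hDA : D + D * A = vecMulVec 1 1 := by
    calc D + D * A = (N * N).toBlock (fun p => p ∈ π p) (fun p => p ∉ π p) := by
          rw [toBlock_mul_eq_add _ (fun p => p ∈ π p), hπ.toBlock_polarMatrix_absolute,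
            Matrix.one_mul]
      _ = (1 : Matrix P P R).toBlock (fun p => p ∈ π p) (fun p => p ∉ π p) + vecMulVec 1 1 := by
          rw [hNN]
          rfl
      _ = vecMulVec 1 1 := by
          rw [toBlock_one_disjoint (q := fun p => p ∉ π p) disjoint_compl_right, zero_add]
  have hCDA : C * D + C * D * A = 0 := by
    rw [Matrix.mul_assoc, ← Matrix.mul_add, hDA, mul_vecMulVec,
      hπ.toBlock_polarMatrix_nonabsolute_absolute_mulVec_one hodd, zero_vecMulVec]
  have hJA : vecMulVec 1 1 * A = 0 := by
    rw [vecMulVec_mul, hπ.one_vecMul_toBlock_polarMatrix_nonabsolute, vecMulVec_zero]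
  refine pow_five_eq_self_of_mul_self_add hAA hJA hCDA ?_
  ext p q
  exact CharTwo.add_self_eq_zero _

section ProjectiveSpace

variable {K : Type*} [Field K]

theorem mem_smul_iff_dotProduct_eq_zero (g : GL (Fin 3) K) (p q : ℙ K (Fin 3 → K)) :
    p ∈ g • q ↔ p.rep ⬝ᵥ g.1 *ᵥ q.rep = 0 := by
  conv_lhs => rw [← p.mk_rep, ← q.mk_rep, Projectivization.smul_mk]
  exact Projectivization.orthogonal_mk p.rep_nonzero _

theorem isPolarity_smul {g : GL (Fin 3) K} (hg : g.1.IsSymm) :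
    IsPolarity fun p : ℙ K (Fin 3 → K) => g • p where
  bijective := MulAction.bijective g
  mem_symm {p q} hpq := by
    rw [mem_smul_iff_dotProduct_eq_zero] at hpq ⊢
    rw [dotProduct_mulVec, ← mulVec_transpose, hg, dotProduct_comm, hpq]

theorem order_projectivization_eq_natCard [Finite K] [DecidableEq K] :
    ProjectivePlane.order (ℙ K (Fin 3 → K)) (ℙ K (Fin 3 → K)) = Nat.card K := by
  have := Fintype.ofFinite (ℙ K (Fin 3 → K))
  have hcard := ProjectivePlane.card_points (ℙ K (Fin 3 → K)) (ℙ K (Fin 3 → K))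
  rw [← Nat.card_eq_fintype_card,
    Projectivization.card_of_finrank K _ (Module.finrank_fin_fun K)] at hcard
  simp only [Finset.sum_range_succ, Finset.sum_range_zero] at hcard
  nlinarith

end ProjectiveSpace

section Conic

variable (F : Type) [Field F] [NeZero (2 : F)]

/-- The Gram matrix of the bilinear form `Bc`, which maps a point of `PG(2,q)` to the coordinates
of its polar line with respect to the conic `Qc = 0`. -/
def conicGram : GL (Fin 3) F :=
  .mkOfDetNeZero !![0, 0, -2⁻¹; 0, 1, 0; -2⁻¹, 0, 0] (by
    simp [det_fin_three, two_ne_zero])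

theorem isSymm_conicGram : (conicGram F).1.IsSymm := by
  ext i j
  fin_cases i <;> fin_cases j <;> rfl

theorem Bc_eq_dotProduct_conicGram (x y : Fin 3 → F) :
    Bc F x y = x ⬝ᵥ (conicGram F).1 *ᵥ y := by
  have h2 : (2 : F)⁻¹ * 2 = 1 := inv_mul_cancel₀ two_ne_zero
  simp only [Bc, Qc, Pi.add_apply, dotProduct, mulVec, conicGram,
    GeneralLinearGroup.mkOfDetNeZero, GeneralLinearGroup.val_mk', of_apply, cons_val',
    cons_val_fin_one, Fin.sum_univ_three, cons_val_zero, cons_val_one, cons_val]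
  linear_combination (x 1 * y 1) * h2

theorem Qc_eq_Bc_self (x : Fin 3 → F) : Qc F x = Bc F x x := by
  have h2 : (2 : F)⁻¹ * 2 = 1 := inv_mul_cancel₀ two_ne_zero
  simp only [Bc, Qc, Pi.add_apply]
  linear_combination -(x 1 ^ 2 - x 0 * x 2) * h2

theorem mem_conicGram_smul_iff (p q : ℙ F (Fin 3 → F)) :
    p ∈ conicGram F • q ↔ Bc F p.rep q.rep = 0 := by
  rw [mem_smul_iff_dotProduct_eq_zero, Bc_eq_dotProduct_conicGram]

/-- The anisotropic points, which index `A11`, are the nonabsolute points of the polarity given by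
`conicGram`. -/
def anisotropicEquiv :
    {p : ℙ F (Fin 3 → F) // Qc F p.rep ≠ 0} ≃ {p : ℙ F (Fin 3 → F) // p ∉ conicGram F • p} :=
  Equiv.subtypeEquivRight fun p => by rw [mem_conicGram_smul_iff, Qc_eq_Bc_self]

theorem reindex_A11 :
    reindex (anisotropicEquiv F) (anisotropicEquiv F) (A11 F)
      = (polarMatrix (ZMod 2) fun p : ℙ F (Fin 3 → F) => conicGram F • p).toBlock
          (fun p => p ∉ conicGram F • p) (fun p => p ∉ conicGram F • p) := by
  ext p q
  exact congrArg ind (propext (mem_conicGram_smul_iff F p.1 q.1).symm)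

end Conic

/-- Over `F₂`, the fifth power of the anisotropic incidence matrix of `PG(2,q)`
equals the matrix itself. -/
theorem stmt10 (F : Type) [Field F] [Fintype F] (q : ℕ)
    (hq : Fintype.card F = q) (hodd : Odd q)
    [Fintype {P : Projectivization F (Fin 3 → F) // Qc F P.rep ≠ 0}]
    [DecidableEq {P : Projectivization F (Fin 3 → F) // Qc F P.rep ≠ 0}] :
    A11 F ^ 5 = A11 F := by
  classical
  have : NeZero (2 : F) := ⟨Ring.two_ne_zero fun hchar => by
    have := FiniteField.even_card_of_char_two hchar
    have := Nat.odd_iff.1 hodd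
    lia⟩
  have : Fintype (ℙ F (Fin 3 → F)) := Fintype.ofFinite _
  apply (reindexAlgEquiv (ZMod 2) (ZMod 2) (anisotropicEquiv F)).injective
  rw [map_pow, coe_reindexAlgEquiv, reindex_A11]
  refine stmt10_general ?_ (isPolarity_smul (isSymm_conicGram F))
  rwa [order_projectivization_eq_natCard, Nat.card_eq_fintype_card, hq]
end

section
/- Let q be an odd prime power, and let P_i ≠ P_j be external points of the conic O = {x_1^2 = x_0 x_2} in PG(2,q). If the line through P_i and P_j is tangent to O, then the complement of N_E(P_i) ∩ N_E(P_j) within the set E of external points has cardinality 3(q−1); if the line through P_i and P_j is not tangent, this complement has cardinality 4(q−3)+6 = 4q−6. In both cases the complement has even cardinality, so |N_E(P_i) ∩ N_E(P_j)| ≡ |E| (mod 2). -/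
/-- `NE F P` is the set of external points, other than `P`, lying on some secant
(meeting the conic twice) or passant (missing the conic) line through `P`. -/
def NE (F : Type) [Field F] (P : Projectivization F (Fin 3 → F)) :
    Set (Projectivization F (Fin 3 → F)) :=
  {R | External F R ∧ R ≠ P ∧
    ∃ L : Submodule F (Fin 3 → F), IsLine F L ∧ P.submodule ≤ L ∧ R.submodule ≤ L ∧
      (nAbs F L = 0 ∨ nAbs F L = 2)}

/-! The conic is a projective line: its points are `(1 : t : t²)` for `t ∈ F ∪ {∞}`. An external
point lies on exactly two tangents, an internal point on none, and two tangents meet in an external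
point, so sending an external point to its pair of points of tangency identifies `E` with the
2-subsets of the `q + 1` points of the conic. Every line is the polar of a point, and is tangent iff
that point is on the conic; so two external points span a tangent line iff their pairs meet. Hence
`N_E(Pᵢ) ∩ N_E(Pⱼ)` is the set of pairs avoiding the union `U` of the pairs of `Pᵢ` and `Pⱼ`, and
the complement has `C(u, 2) + u (q + 1 - u)` elements, where `u = |U|` is 3 or 4. -/

open scoped OnePoint LinearAlgebra.Projectivization

section Coordinates

variable {F : Type} [Field F]

/-- Homogeneous coordinates on the projective line `F ∪ {∞}`, normalised as `(1 : t)` and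
`∞ = (0 : 1)`. They make the formulas on the conic below uniform in `t`. -/
def homCoords (t : OnePoint F) : F × F := t.elim (0, 1) fun a ↦ (1, a)

/-- The bracket `[s t]`: the determinant of the homogeneous coordinates of `s` and `t`. -/
def bracket (s t : OnePoint F) : F :=
  (homCoords s).1 * (homCoords t).2 - (homCoords s).2 * (homCoords t).1

lemma bracket_eq_zero_iff {s t : OnePoint F} : bracket s t = 0 ↔ s = t := by
  induction s using OnePoint.rec <;> induction t using OnePoint.rec <;>
    simp [bracket, homCoords, sub_eq_zero, eq_comm]

/-- The point of the conic `x₁² = x₀x₂` with parameter `t`, namely `(1, t, t²)`, or `(0, 0, 1)` for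
`t = ∞`. -/
def conicPoint (t : OnePoint F) : Fin 3 → F :=
  ![(homCoords t).1 ^ 2, (homCoords t).1 * (homCoords t).2, (homCoords t).2 ^ 2]

/-- The meeting point of the tangents to the conic at `conicPoint s` and `conicPoint t`, for
`s ≠ t`. -/
def tangentMeet (s t : OnePoint F) : Fin 3 → F :=
  ![2 * (homCoords s).1 * (homCoords t).1,
    (homCoords s).1 * (homCoords t).2 + (homCoords s).2 * (homCoords t).1,
    2 * (homCoords s).2 * (homCoords t).2]

lemma tangentMeet_comm (s t : OnePoint F) : tangentMeet s t = tangentMeet t s := by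
  ext i
  fin_cases i <;> simp [tangentMeet] <;> ring

lemma Qc_smul (k : F) (v : Fin 3 → F) : Qc F (k • v) = k ^ 2 * Qc F v := by
  simp only [Qc, Pi.smul_apply, smul_eq_mul]
  ring

lemma Qc_conicPoint (t : OnePoint F) : Qc F (conicPoint t) = 0 := by
  simp only [Qc, conicPoint, Matrix.cons_val]
  ring

lemma Qc_tangentMeet (s t : OnePoint F) : Qc F (tangentMeet s t) = bracket s t ^ 2 := by
  simp only [Qc, tangentMeet, bracket, Matrix.cons_val]
  ring

lemma conicPoint_ne_zero (t : OnePoint F) : conicPoint t ≠ 0 := by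
  intro h
  have h0 := congrFun h 0
  have h2 := congrFun h 2
  induction t using OnePoint.rec <;> simp [conicPoint, homCoords] at h0 h2

lemma tangentMeet_ne_zero {s t : OnePoint F} (hst : s ≠ t) : tangentMeet s t ≠ 0 := by
  intro h
  have hQ := Qc_tangentMeet s t
  rw [h] at hQ
  exact hst (bracket_eq_zero_iff.1 (pow_eq_zero_iff two_ne_zero |>.1 (by simpa [Qc] using hQ.symm)))

lemma exists_eq_smul_conicPoint {v : Fin 3 → F} (hv : Qc F v = 0) :
    ∃ (t : OnePoint F) (k : F), v = k • conicPoint t := by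
  rw [Qc, sub_eq_zero] at hv
  by_cases h0 : v 0 = 0
  · have h1 : v 1 = 0 := by simpa [h0] using hv
    refine ⟨∞, v 2, ?_⟩
    ext i
    fin_cases i <;> simp [conicPoint, homCoords, h0, h1]
  · refine ⟨(v 1 / v 0 : F), v 0, ?_⟩
    ext i
    fin_cases i <;> simp [conicPoint, homCoords] <;> field_simp
    linear_combination -hv

-- The two parameters are the roots of the binary quadratic form `v₀t² - 2v₁t + v₂`, whose
-- discriminant is `4 Q(v)`.
lemma exists_eq_smul_tangentMeet [NeZero (2 : F)] {v : Fin 3 → F} (hsq : IsSquare (Qc F v))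
    (hv : Qc F v ≠ 0) : ∃ (s t : OnePoint F) (k : F), s ≠ t ∧ v = k • tangentMeet s t := by
  have h2 : (2 : F) ≠ 0 := NeZero.ne 2
  obtain ⟨r, hr⟩ := hsq
  by_cases h0 : v 0 = 0
  · have h1 : v 1 ≠ 0 := fun h1 ↦ hv (by simp [Qc, h0, h1])
    refine ⟨∞, (v 2 / (2 * v 1) : F), v 1, OnePoint.infty_ne_coe _, ?_⟩
    ext i
    fin_cases i <;> simp [tangentMeet, homCoords, h0]
    field_simp
  · have hr0 : r ≠ 0 := by
      rintro rfl
      exact hv (by simpa using hr)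
    have hroots : (v 1 + r) / v 0 ≠ (v 1 - r) / v 0 := by
      intro h
      have : 2 * r = 0 := by
        field_simp at h
        linear_combination h
      exact mul_ne_zero h2 hr0 this
    refine ⟨((v 1 + r) / v 0 : F), ((v 1 - r) / v 0 : F), v 0 / 2,
      fun h ↦ hroots (OnePoint.coe_injective h), ?_⟩
    rw [Qc] at hr
    ext i
    fin_cases i <;> simp [tangentMeet, homCoords] <;> field_simp
    · ring
    · linear_combination -hr

end Coordinates

section Polarity

variable {F : Type} [Field F]

/-- The form `Qc` as a bundled quadratic form. -/
def conicForm : QuadraticForm F (Fin 3 → F) := QuadraticMap.proj 1 1 - QuadraticMap.proj 0 2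

/-- The polarity of the conic: `conicPolar w` is the linear form whose kernel is the polar line of
`w`. It is `2 * Bc F w`, normalised so as to avoid dividing by `2`. -/
def conicPolar : (Fin 3 → F) →ₗ[F] Module.Dual F (Fin 3 → F) := conicForm.polarBilin

lemma conicPolar_apply (w x : Fin 3 → F) :
    conicPolar w x = 2 * w 1 * x 1 - w 0 * x 2 - w 2 * x 0 := by
  simp only [conicPolar, conicForm, QuadraticMap.polarBilin_apply_apply, QuadraticMap.polar,
    sub_apply, QuadraticMap.proj_apply, Pi.add_apply]
  ring

lemma conicPolar_comm (w x : Fin 3 → F) : conicPolar w x = conicPolar x w :=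
  QuadraticMap.polar_comm _ _ _

lemma conicPolar_injective [NeZero (2 : F)] :
    Function.Injective (conicPolar : (Fin 3 → F) →ₗ[F] Module.Dual F (Fin 3 → F)) := by
  rw [← LinearMap.ker_eq_bot, LinearMap.ker_eq_bot']
  intro w hw
  have hpolar (x : Fin 3 → F) : 2 * w 1 * x 1 - w 0 * x 2 - w 2 * x 0 = 0 := by
    rw [← conicPolar_apply, hw, LinearMap.zero_apply]
  ext i
  fin_cases i
  · simpa using hpolar ![0, 0, 1]
  · simpa [NeZero.ne (2 : F)] using hpolar ![0, 1, 0]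
  · simpa using hpolar ![1, 0, 0]

lemma conicPolar_surjective [NeZero (2 : F)] :
    Function.Surjective (conicPolar : (Fin 3 → F) →ₗ[F] Module.Dual F (Fin 3 → F)) :=
  (LinearMap.injective_iff_surjective_of_finrank_eq_finrank
    Subspace.dual_finrank_eq.symm).1 conicPolar_injective

lemma conicPolar_conicPoint (s t : OnePoint F) :
    conicPolar (conicPoint s) (conicPoint t) = -bracket s t ^ 2 := by
  simp only [conicPolar_apply, conicPoint, bracket, Matrix.cons_val]
  ring

lemma conicPolar_tangentMeet (s t r : OnePoint F) :
    conicPolar (tangentMeet s t) (conicPoint r) = -(2 * bracket s r * bracket t r) := by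
  simp only [conicPolar_apply, tangentMeet, conicPoint, bracket, Matrix.cons_val]
  ring

end Polarity

section ContactSet

variable {F : Type} [Field F]

/-- The parameters of the conic points on the polar line of `w`; equivalently, of the conic points
whose tangent passes through `w`. -/
def contactSet (w : Fin 3 → F) : Set (OnePoint F) := {t | conicPolar w (conicPoint t) = 0}

lemma mem_contactSet {w : Fin 3 → F} {t : OnePoint F} :
    t ∈ contactSet w ↔ conicPolar w (conicPoint t) = 0 := Iff.rfl

lemma contactSet_smul {k : F} (hk : k ≠ 0) (w : Fin 3 → F) :
    contactSet (k • w) = contactSet w := by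
  ext t
  simp [mem_contactSet, hk]

lemma contactSet_conicPoint (t : OnePoint F) : contactSet (conicPoint t) = {t} := by
  ext r
  simp [mem_contactSet, conicPolar_conicPoint, bracket_eq_zero_iff, eq_comm (a := r)]

lemma contactSet_tangentMeet [NeZero (2 : F)] (s t : OnePoint F) :
    contactSet (tangentMeet s t) = {s, t} := by
  ext r
  simp [mem_contactSet, conicPolar_tangentMeet, bracket_eq_zero_iff, NeZero.ne (2 : F),
    eq_comm (a := r)]

lemma isSquare_Qc_of_mem_contactSet {w : Fin 3 → F} {t : OnePoint F} (ht : t ∈ contactSet w) :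
    IsSquare (Qc F w) := by
  rw [mem_contactSet, conicPolar_apply] at ht
  induction t using OnePoint.rec with
  | infty =>
    have h0 : w 0 = 0 := by simpa [conicPoint, homCoords] using ht
    exact ⟨w 1, by rw [Qc, h0]; ring⟩
  | coe t =>
    have hroot : 2 * w 1 * t - w 0 * t ^ 2 - w 2 = 0 := by
      simpa [conicPoint, homCoords] using ht
    exact ⟨w 1 - w 0 * t, by rw [Qc]; linear_combination w 0 * hroot⟩

lemma ncard_contactSet_of_Qc_eq_zero {w : Fin 3 → F} (hw : w ≠ 0) (hQ : Qc F w = 0) :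
    (contactSet w).ncard = 1 := by
  obtain ⟨t, k, rfl⟩ := exists_eq_smul_conicPoint hQ
  rw [contactSet_smul (left_ne_zero_of_smul hw), contactSet_conicPoint, Set.ncard_singleton]

lemma ncard_contactSet_of_isSquare [NeZero (2 : F)] {w : Fin 3 → F} (hsq : IsSquare (Qc F w))
    (hQ : Qc F w ≠ 0) : (contactSet w).ncard = 2 := by
  obtain ⟨s, t, k, hst, rfl⟩ := exists_eq_smul_tangentMeet hsq hQ
  have hk : k ≠ 0 := by
    rintro rfl
    simp [Qc] at hQ
  rw [contactSet_smul hk, contactSet_tangentMeet, Set.ncard_pair hst]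

lemma contactSet_eq_empty_of_not_isSquare {w : Fin 3 → F} (hsq : ¬IsSquare (Qc F w)) :
    contactSet w = ∅ :=
  Set.eq_empty_of_forall_notMem fun _ ht ↦ hsq (isSquare_Qc_of_mem_contactSet ht)

lemma ncard_contactSet_le_two [NeZero (2 : F)] {w : Fin 3 → F} (hw : w ≠ 0) :
    (contactSet w).ncard ≤ 2 := by
  by_cases hQ : Qc F w = 0
  · simp [ncard_contactSet_of_Qc_eq_zero hw hQ]
  by_cases hsq : IsSquare (Qc F w)
  · exact (ncard_contactSet_of_isSquare hsq hQ).le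
  · simp [contactSet_eq_empty_of_not_isSquare hsq]

lemma ncard_contactSet_eq_one_iff [NeZero (2 : F)] {w : Fin 3 → F} (hw : w ≠ 0) :
    (contactSet w).ncard = 1 ↔ Qc F w = 0 := by
  refine ⟨fun h ↦ by_contra fun hQ ↦ ?_, ncard_contactSet_of_Qc_eq_zero hw⟩
  by_cases hsq : IsSquare (Qc F w)
  · simp [ncard_contactSet_of_isSquare hsq hQ] at h
  · simp [contactSet_eq_empty_of_not_isSquare hsq] at h

end ContactSet

section Lines

variable {F : Type} [Field F]

lemma isLine_sup {P R : ℙ F (Fin 3 → F)} (hPR : P ≠ R) : IsLine F (P.submodule ⊔ R.submodule) := by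
  have hspan := finrank_span_eq_card (Projectivization.linearIndependent_pair_iff_ne.2 hPR)
  rwa [Matrix.range_cons_cons_empty, Submodule.span_insert, ← Projectivization.submodule_eq,
    ← Projectivization.submodule_eq, Fintype.card_fin] at hspan

lemma IsLine.eq_sup {L : Submodule F (Fin 3 → F)} (hL : IsLine F L) {P R : ℙ F (Fin 3 → F)}
    (hPR : P ≠ R) (hP : P.submodule ≤ L) (hR : R.submodule ≤ L) :
    L = P.submodule ⊔ R.submodule :=
  (Submodule.eq_of_le_of_finrank_eq (sup_le hP hR) ((isLine_sup hPR).trans hL.symm)).symm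

lemma isLine_ker {f : Module.Dual F (Fin 3 → F)} (hf : f ≠ 0) : IsLine F (LinearMap.ker f) := by
  have h := Module.Dual.finrank_ker_add_one_of_ne_zero hf
  rw [Module.finrank_fin_fun] at h
  exact Nat.succ_injective h

lemma isLine_ker_conicPolar [NeZero (2 : F)] {w : Fin 3 → F} (hw : w ≠ 0) :
    IsLine F (LinearMap.ker (conicPolar w)) :=
  isLine_ker ((map_ne_zero_iff _ conicPolar_injective).2 hw)

lemma IsLine.exists_eq_ker_conicPolar [NeZero (2 : F)] {L : Submodule F (Fin 3 → F)}
    (hL : IsLine F L) : ∃ w ≠ 0, L = LinearMap.ker (conicPolar w) := by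
  have hlt : L < ⊤ := by
    rw [lt_top_iff_ne_top]
    rintro rfl
    simp [IsLine] at hL
  obtain ⟨f, hf, hle⟩ := Submodule.exists_le_ker_of_lt_top L hlt
  obtain ⟨w, rfl⟩ := conicPolar_surjective f
  refine ⟨w, ne_zero_of_map hf, ?_⟩
  exact Submodule.eq_of_le_of_finrank_eq hle (hL.trans (isLine_ker hf).symm)

/-- The point of the projective plane spanned by `conicPoint t`. -/
def conicPt (t : OnePoint F) : ℙ F (Fin 3 → F) :=
  Projectivization.mk F (conicPoint t) (conicPoint_ne_zero t)

lemma eq_mk_of_rep_eq_smul {K V : Type*} [DivisionRing K] [AddCommGroup V] [Module K V] {P : ℙ K V}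
    {v : V} (hv : v ≠ 0) {k : K} (h : P.rep = k • v) : P = Projectivization.mk K v hv := by
  rw [← P.mk_rep, Projectivization.mk_eq_mk_iff']
  exact ⟨k, h.symm⟩

lemma contactSet_rep_mk {v : Fin 3 → F} (hv : v ≠ 0) :
    contactSet (Projectivization.mk F v hv).rep = contactSet v := by
  obtain ⟨k, hk⟩ := Projectivization.exists_smul_eq_mk_rep F v hv
  rw [← hk, Units.smul_def, contactSet_smul k.ne_zero]

lemma conicPt_injective : Function.Injective (conicPt : OnePoint F → ℙ F (Fin 3 → F)) := by
  intro s t hst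
  have h := congrArg (fun P : ℙ F (Fin 3 → F) ↦ contactSet P.rep) hst
  simpa only [conicPt, contactSet_rep_mk, contactSet_conicPoint, Set.singleton_eq_singleton_iff]
    using h

lemma absolute_iff_exists_conicPt {P : ℙ F (Fin 3 → F)} : Absolute F P ↔ ∃ t, conicPt t = P := by
  constructor
  · intro hP
    obtain ⟨t, k, hk⟩ := exists_eq_smul_conicPoint hP
    exact ⟨t, (eq_mk_of_rep_eq_smul _ hk).symm⟩
  · rintro ⟨t, rfl⟩
    obtain ⟨k, hk⟩ := Projectivization.exists_smul_eq_mk_rep F _ (conicPoint_ne_zero t)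
    rw [Absolute, conicPt, ← hk, Units.smul_def, Qc_smul, Qc_conicPoint, mul_zero]

lemma submodule_conicPt_le_ker_iff {t : OnePoint F} {w : Fin 3 → F} :
    (conicPt t).submodule ≤ LinearMap.ker (conicPolar w) ↔ t ∈ contactSet w := by
  rw [conicPt, Projectivization.submodule_mk, Submodule.span_singleton_le_iff_mem,
    LinearMap.mem_ker, mem_contactSet]

lemma nAbs_ker_conicPolar (w : Fin 3 → F) :
    nAbs F (LinearMap.ker (conicPolar w)) = (contactSet w).ncard := by
  have himage : {P : ℙ F (Fin 3 → F) | Absolute F P ∧ P.submodule ≤ LinearMap.ker (conicPolar w)}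
      = conicPt '' contactSet w := by
    ext P
    constructor
    · rintro ⟨hP, hPw⟩
      obtain ⟨t, rfl⟩ := absolute_iff_exists_conicPt.1 hP
      exact ⟨t, submodule_conicPt_le_ker_iff.1 hPw, rfl⟩
    · rintro ⟨t, ht, rfl⟩
      exact ⟨absolute_iff_exists_conicPt.2 ⟨t, rfl⟩, submodule_conicPt_le_ker_iff.2 ht⟩
  rw [← Set.ncard_image_of_injective _ conicPt_injective, ← himage]
  rfl

lemma IsLine.nAbs_le_two [NeZero (2 : F)] {L : Submodule F (Fin 3 → F)} (hL : IsLine F L) :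
    nAbs F L ≤ 2 := by
  obtain ⟨w, hw, rfl⟩ := hL.exists_eq_ker_conicPolar
  rw [nAbs_ker_conicPolar]
  exact ncard_contactSet_le_two hw

lemma IsLine.nAbs_eq_one_iff [NeZero (2 : F)] {L : Submodule F (Fin 3 → F)} (hL : IsLine F L) :
    nAbs F L = 1 ↔ ∃ t, L = LinearMap.ker (conicPolar (conicPoint t)) := by
  constructor
  · obtain ⟨w, hw, rfl⟩ := hL.exists_eq_ker_conicPolar
    rw [nAbs_ker_conicPolar, ncard_contactSet_eq_one_iff hw]
    intro hQ
    obtain ⟨t, k, rfl⟩ := exists_eq_smul_conicPoint hQ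
    exact ⟨t, by rw [map_smul, LinearMap.ker_smul _ _ (left_ne_zero_of_smul hw)]⟩
  · rintro ⟨t, rfl⟩
    rw [nAbs_ker_conicPolar, contactSet_conicPoint, Set.ncard_singleton]

lemma submodule_le_tangent_iff {P : ℙ F (Fin 3 → F)} {t : OnePoint F} :
    P.submodule ≤ LinearMap.ker (conicPolar (conicPoint t)) ↔ t ∈ contactSet P.rep := by
  rw [Projectivization.submodule_eq, Submodule.span_singleton_le_iff_mem, LinearMap.mem_ker,
    conicPolar_comm, mem_contactSet]

lemma IsLine.nAbs_eq_one_iff_inter_nonempty [NeZero (2 : F)] {L : Submodule F (Fin 3 → F)}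
    (hL : IsLine F L) {P R : ℙ F (Fin 3 → F)} (hPR : P ≠ R) (hP : P.submodule ≤ L)
    (hR : R.submodule ≤ L) :
    nAbs F L = 1 ↔ (contactSet P.rep ∩ contactSet R.rep).Nonempty := by
  rw [hL.nAbs_eq_one_iff]
  refine exists_congr fun t ↦ ?_
  rw [Set.mem_inter_iff, ← submodule_le_tangent_iff, ← submodule_le_tangent_iff]
  constructor
  · rintro rfl
    exact ⟨hP, hR⟩
  · rintro ⟨hPt, hRt⟩
    have htangent := isLine_ker_conicPolar (conicPoint_ne_zero t)
    rw [hL.eq_sup hPR hP hR, htangent.eq_sup hPR hPt hRt]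

end Lines

section ExternalPoints

variable {F : Type} [Field F]

lemma external_mk_tangentMeet {s t : OnePoint F} (hst : s ≠ t) :
    External F (Projectivization.mk F (tangentMeet s t) (tangentMeet_ne_zero hst)) := by
  obtain ⟨k, hk⟩ := Projectivization.exists_smul_eq_mk_rep F _ (tangentMeet_ne_zero hst)
  rw [External, ← hk, Units.smul_def, Qc_smul, Qc_tangentMeet, ← mul_pow]
  exact ⟨IsSquare.sq _, pow_ne_zero 2 (mul_ne_zero k.ne_zero (bracket_eq_zero_iff.not.2 hst))⟩

variable [NeZero (2 : F)]

lemma External.ncard_contactSet {P : ℙ F (Fin 3 → F)} (hP : External F P) :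
    (contactSet P.rep).ncard = 2 :=
  ncard_contactSet_of_isSquare hP.1 hP.2

lemma External.finite_contactSet {P : ℙ F (Fin 3 → F)} (hP : External F P) :
    (contactSet P.rep).Finite :=
  Set.finite_of_ncard_ne_zero (hP.ncard_contactSet.trans_ne two_ne_zero)

lemma External.exists_eq_mk_tangentMeet {P : ℙ F (Fin 3 → F)} (hP : External F P) :
    ∃ (s t : OnePoint F) (hst : s ≠ t),
      P = Projectivization.mk F (tangentMeet s t) (tangentMeet_ne_zero hst) := by
  obtain ⟨s, t, k, hst, hk⟩ := exists_eq_smul_tangentMeet hP.1 hP.2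
  exact ⟨s, t, hst, eq_mk_of_rep_eq_smul _ hk⟩

lemma bijOn_contactSet : Set.BijOn (fun P : ℙ F (Fin 3 → F) ↦ contactSet P.rep)
    {P | External F P} {S | S.ncard = 2} := by
  refine ⟨fun P hP ↦ hP.ncard_contactSet, fun P hP R hR h ↦ ?_, fun S hS ↦ ?_⟩
  · obtain ⟨s, t, hst, rfl⟩ := External.exists_eq_mk_tangentMeet hP
    obtain ⟨s', t', hst', rfl⟩ := External.exists_eq_mk_tangentMeet hR
    simp only [contactSet_rep_mk, contactSet_tangentMeet] at h
    obtain ⟨rfl, rfl⟩ | ⟨rfl, rfl⟩ := Set.pair_eq_pair_iff.1 h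
    · rfl
    · simp only [tangentMeet_comm]
  · obtain ⟨s, t, hst, rfl⟩ := Set.ncard_eq_two.1 hS
    exact ⟨_, external_mk_tangentMeet hst, by simp only [contactSet_rep_mk, contactSet_tangentMeet]⟩

lemma ncard_external_contactSet_subset {T : Set (OnePoint F)} (hT : T.Finite) :
    {R : ℙ F (Fin 3 → F) | External F R ∧ contactSet R.rep ⊆ T}.ncard = T.ncard.choose 2 := by
  lift T to Finset (OnePoint F) using hT
  have himage : (fun R : ℙ F (Fin 3 → F) ↦ contactSet R.rep) ''
      {R | External F R ∧ contactSet R.rep ⊆ T} =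
      (fun S : Finset (OnePoint F) ↦ (S : Set (OnePoint F))) '' T.powersetCard 2 := by
    ext S
    constructor
    · rintro ⟨R, ⟨hR, hRT⟩, rfl⟩
      lift contactSet R.rep to Finset (OnePoint F) using T.finite_toSet.subset hRT
        with S hS
      have hcard := hR.ncard_contactSet
      rw [← hS, Set.ncard_coe_finset] at hcard
      exact ⟨S, Finset.mem_powersetCard.2 ⟨Finset.coe_subset.1 hRT, hcard⟩, rfl⟩
    · rintro ⟨S, hS, rfl⟩
      obtain ⟨hST, hcard⟩ := Finset.mem_powersetCard.1 hS
      obtain ⟨R, hR, hRS⟩ := bijOn_contactSet.surjOn ((Set.ncard_coe_finset S).trans hcard)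
      exact ⟨R, ⟨hR, hRS.trans_subset (Finset.coe_subset.2 hST)⟩, hRS⟩
  have hinj : Set.InjOn (fun R : ℙ F (Fin 3 → F) ↦ contactSet R.rep)
      {R | External F R ∧ contactSet R.rep ⊆ T} :=
    bijOn_contactSet.injOn.mono fun _ hR ↦ hR.1
  rw [← hinj.ncard_image, himage, Set.ncard_image_of_injective _ Finset.coe_injective,
    Set.ncard_coe_finset, Finset.card_powersetCard, Set.ncard_coe_finset]

lemma mem_NE_iff {P R : ℙ F (Fin 3 → F)} (hP : External F P) :
    R ∈ NE F P ↔ External F R ∧ Disjoint (contactSet R.rep) (contactSet P.rep) := by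
  rw [disjoint_comm, Set.disjoint_iff_inter_eq_empty, ← Set.not_nonempty_iff_eq_empty]
  constructor
  · rintro ⟨hR, hRP, L, hL, hPL, hRL, habs⟩
    refine ⟨hR, ?_⟩
    rw [← hL.nAbs_eq_one_iff_inter_nonempty hRP.symm hPL hRL]
    omega
  · rintro ⟨hR, hdisj⟩
    have hPR : P ≠ R := by
      rintro rfl
      rw [Set.inter_self] at hdisj
      exact hdisj (Set.nonempty_of_ncard_ne_zero (by simp [hP.ncard_contactSet]))
    have hL := isLine_sup hPR
    rw [← hL.nAbs_eq_one_iff_inter_nonempty hPR le_sup_left le_sup_right] at hdisj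
    have hle := hL.nAbs_le_two
    exact ⟨hR, hPR.symm, _, hL, le_sup_left, le_sup_right, by omega⟩

lemma mem_NE_inter_NE_iff {P P' R : ℙ F (Fin 3 → F)} (hP : External F P) (hP' : External F P') :
    R ∈ NE F P ∩ NE F P' ↔
      External F R ∧ Disjoint (contactSet R.rep) (contactSet P.rep ∪ contactSet P'.rep) := by
  rw [Set.mem_inter_iff, mem_NE_iff hP, mem_NE_iff hP', Set.disjoint_union_right,
    and_and_and_comm, and_self]

lemma ncard_contactSet_inter_lt_two {P R : ℙ F (Fin 3 → F)} (hP : External F P)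
    (hR : External F R) (hPR : P ≠ R) : (contactSet P.rep ∩ contactSet R.rep).ncard < 2 := by
  by_contra! hle
  have hinterP := Set.eq_of_subset_of_ncard_le Set.inter_subset_left
    (hP.ncard_contactSet.trans_le hle) hP.finite_contactSet
  have hinterR := Set.eq_of_subset_of_ncard_le Set.inter_subset_right
    (hR.ncard_contactSet.trans_le hle) hR.finite_contactSet
  exact hPR (bijOn_contactSet.injOn hP hR (hinterP.symm.trans hinterR))

lemma ncard_contactSet_union_of_inter_nonempty {P R : ℙ F (Fin 3 → F)} (hP : External F P)
    (hR : External F R) (hPR : P ≠ R) (hmeet : (contactSet P.rep ∩ contactSet R.rep).Nonempty) :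
    (contactSet P.rep ∪ contactSet R.rep).ncard = 3 := by
  have hunion := Set.ncard_union_add_ncard_inter _ _ hP.finite_contactSet hR.finite_contactSet
  rw [hP.ncard_contactSet, hR.ncard_contactSet] at hunion
  have hpos := (Set.ncard_pos (hP.finite_contactSet.inter_of_left _)).2 hmeet
  have hlt := ncard_contactSet_inter_lt_two hP hR hPR
  omega

lemma ncard_contactSet_union_of_disjoint {P R : ℙ F (Fin 3 → F)} (hP : External F P)
    (hR : External F R) (hdisj : Disjoint (contactSet P.rep) (contactSet R.rep)) :
    (contactSet P.rep ∪ contactSet R.rep).ncard = 4 := by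
  rw [Set.ncard_union_eq hdisj hP.finite_contactSet hR.finite_contactSet,
    hP.ncard_contactSet, hR.ncard_contactSet]

end ExternalPoints

section Counting

lemma add_choose_two (m n : ℕ) : (m + n).choose 2 = m.choose 2 + m * n + n.choose 2 := by
  simp only [Nat.add_choose_eq, Finset.Nat.sum_antidiagonal_eq_sum_range_succ_mk,
    Finset.sum_range_succ, Finset.sum_range_zero, Nat.sub_zero, Nat.sub_self, Nat.reduceSub,
    Nat.choose_zero_right, Nat.choose_one_right]
  ring

lemma card_onePoint (X : Type*) [Fintype X] : Nat.card (OnePoint X) = Fintype.card X + 1 :=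
  Nat.card_eq_fintype_card.trans Fintype.card_option

variable {F : Type} [Field F] [Fintype F] [NeZero (2 : F)]

lemma ncard_external :
    {R : ℙ F (Fin 3 → F) | External F R}.ncard = (Fintype.card F + 1).choose 2 := by
  rw [← card_onePoint, ← Set.ncard_univ, ← ncard_external_contactSet_subset Set.finite_univ]
  simp only [Set.subset_univ, and_true]

lemma ncard_external_disjoint_contactSet (U : Set (OnePoint F)) :
    {R : ℙ F (Fin 3 → F) | External F R ∧ Disjoint (contactSet R.rep) U}.ncard =
      (Fintype.card F + 1 - U.ncard).choose 2 := by
  rw [← card_onePoint, ← Set.ncard_compl U, ← ncard_external_contactSet_subset Uᶜ.toFinite]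
  simp only [Set.subset_compl_iff_disjoint_right]

lemma ncard_external_not_disjoint_contactSet (U : Set (OnePoint F)) :
    {R : ℙ F (Fin 3 → F) | External F R ∧ ¬Disjoint (contactSet R.rep) U}.ncard =
      U.ncard.choose 2 + U.ncard * (Fintype.card F + 1 - U.ncard) := by
  have hsplit := Set.ncard_inter_add_ncard_sdiff_eq_ncard {R : ℙ F (Fin 3 → F) | External F R}
    {R | Disjoint (contactSet R.rep) U} (Set.toFinite _)
  have hle : U.ncard ≤ Fintype.card F + 1 := (Set.ncard_le_card U).trans_eq (card_onePoint F)
  have hchoose := add_choose_two U.ncard (Fintype.card F + 1 - U.ncard)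
  rw [Nat.add_sub_cancel' hle, ← ncard_external, ← hsplit, ← Set.ofPred_and,
    ncard_external_disjoint_contactSet, add_comm] at hchoose
  exact Nat.add_right_cancel hchoose

lemma ncard_external_notMem_NE_inter_NE {P P' : ℙ F (Fin 3 → F)} (hP : External F P)
    (hP' : External F P') {u : ℕ} (hu : (contactSet P.rep ∪ contactSet P'.rep).ncard = u) :
    {R | External F R ∧ R ∉ NE F P ∩ NE F P'}.ncard =
      u.choose 2 + u * (Fintype.card F + 1 - u) := by
  rw [← hu, ← ncard_external_not_disjoint_contactSet]
  congr! 3 with R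
  rw [mem_NE_inter_NE_iff hP hP', not_and, and_congr_right_iff]
  exact fun hR ↦ forall_prop_of_true hR

end Counting

/-- For distinct external points `Pᵢ ≠ Pⱼ` of `PG(2,q)`, the complement of
`NE(Pᵢ) ∩ NE(Pⱼ)` within the set `E` of external points has cardinality `3(q-1)` if
the line through `Pᵢ` and `Pⱼ` is tangent to the conic, and `4(q-3)+6 = 4q-6`
otherwise; in both cases `|NE(Pᵢ) ∩ NE(Pⱼ)| ≡ |E| (mod 2)`. -/
theorem stmt15 (F : Type) [Field F] [Fintype F] (q : ℕ)
    (hq : Fintype.card F = q) (hodd : Odd q)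
    (Pi Pj : Projectivization F (Fin 3 → F)) (hPi : External F Pi) (hPj : External F Pj)
    (hij : Pi ≠ Pj)
    (L : Submodule F (Fin 3 → F)) (hL : IsLine F L)
    (hiL : Pi.submodule ≤ L) (hjL : Pj.submodule ≤ L) :
    (nAbs F L = 1 →
      {R : Projectivization F (Fin 3 → F) |
        External F R ∧ R ∉ NE F Pi ∩ NE F Pj}.ncard = 3 * (q - 1)) ∧
    (nAbs F L ≠ 1 →
      {R : Projectivization F (Fin 3 → F) |
        External F R ∧ R ∉ NE F Pi ∩ NE F Pj}.ncard = 4 * q - 6) ∧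
    (NE F Pi ∩ NE F Pj).ncard % 2 =
      {R : Projectivization F (Fin 3 → F) | External F R}.ncard % 2 := by
  subst hq
  have hchar : ringChar F ≠ 2 := fun h ↦
    Nat.not_even_iff_odd.2 hodd (Nat.even_iff.2 (FiniteField.even_card_of_char_two h))
  have : NeZero (2 : F) := ⟨Ring.two_ne_zero hchar⟩
  have hcard : 1 < Fintype.card F := Fintype.one_lt_card
  have hsum : {R | External F R ∧ R ∉ NE F Pi ∩ NE F Pj}.ncard + (NE F Pi ∩ NE F Pj).ncard =
      {R | External F R}.ncard :=
    Set.ncard_sdiff_add_ncard_of_subset fun R hR ↦ hR.1.1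
  have htangent := hL.nAbs_eq_one_iff_inter_nonempty hij hiL hjL
  obtain ⟨m, hm⟩ := hodd
  by_cases habs : nAbs F L = 1
  · have hcompl : {R | External F R ∧ R ∉ NE F Pi ∩ NE F Pj}.ncard =
        3 + 3 * (Fintype.card F + 1 - 3) :=
      ncard_external_notMem_NE_inter_NE hPi hPj
        (ncard_contactSet_union_of_inter_nonempty hPi hPj hij (htangent.1 habs))
    exact ⟨fun _ ↦ by omega, fun h ↦ absurd habs h, by omega⟩
  · have hdisj : Disjoint (contactSet Pi.rep) (contactSet Pj.rep) :=
      Set.disjoint_iff_inter_eq_empty.2 (Set.not_nonempty_iff_eq_empty.1 (htangent.not.1 habs))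
    have hcompl : {R | External F R ∧ R ∉ NE F Pi ∩ NE F Pj}.ncard =
        6 + 4 * (Fintype.card F + 1 - 4) :=
      ncard_external_notMem_NE_inter_NE hPi hPj
        (ncard_contactSet_union_of_disjoint hPi hPj hdisj)
    exact ⟨fun h ↦ absurd h habs, fun _ ↦ by omega, by omega⟩
end
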